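/- arXiv:2504.09579 — 4 statements merged into one kernel-verified Lean document; each statement's English description precedes it below -/
import Mathlib

section
/- Let n > 1 be a positive integer and let p be the smallest prime divisor of n. Then n is nice if and only if n/p has fewer than p distinct prime factors, i.e., ω(n/p) < p. -/
/-- A congruence is a pair `(a, d)` representing `a (mod d)`, with residue `a : ℤ`
and modulus `d : ℕ`. Two congruences overlap if some integer satisfies both. -/
def Overlap (c₁ c₂ : ℤ × ℕ) : Prop :=
  ∃ x : ℤ, x ≡ c₁.1 [ZMOD (c₁.2 : ℤ)] ∧ x ≡ c₂.1 [ZMOD (c₂.2 : ℤ)]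

/-- A set of congruences is good if any two distinct overlapping congruences in it
have coprime moduli. -/
def IsGood (A : Set (ℤ × ℕ)) : Prop :=
  ∀ c₁ ∈ A, ∀ c₂ ∈ A, c₁ ≠ c₂ → Overlap c₁ c₂ → Nat.Coprime c₁.2 c₂.2

/-- A positive integer `n` is nice if there is a choice of residues `a d` for each
divisor `d > 1` of `n` such that `{a_d (mod d) : d ∣ n, d > 1}` is good. -/
def IsNice (n : ℕ) : Prop :=
  ∃ a : ℕ → ℤ, IsGood {c : ℤ × ℕ | ∃ d : ℕ, d ∣ n ∧ 1 < d ∧ c = (a d, d)}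

/-!
If `p > 1` divides `n`, then the moduli `p * q`, with `q = 1` or `q` a prime factor of `n / p`, have
pairwise greatest common divisor `p`, so the residues chosen for them are distinct modulo `p`, and
`ω(n / p) + 1 ≤ p`.

Conversely, the condition at the smallest prime factor implies it at all the others, since
`ω(n) ≤ ω(n / p) + 1`. Put a cyclic order on every set of primes dividing `n` and number these
primes from `1` to `ω(n)`. For `d ∣ n` and a prime power `q ^ v ∥ d` choose
`a_d ≡ q ^ (v - 1) * i (mod q ^ v)`, where `i` is the number of the successor of `q` in the cyclic
order on the prime factors of `d`. There is room for `ω(n)` such digits modulo `q`, and for `ω(n)`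
nonzero ones if `q ^ 2 ∣ n`.
If the classes of `d` and `e` overlap, then every common prime factor has the same exponent and the
same successor in `d` and in `e`. Starting from one common prime factor, the successors therefore
run through the prime factors of both, so `d = e`.
-/

open Finset

section CyclicOrders

variable {α : Type*}

lemma subset_of_isCycleOn_of_mapsTo {f : Equiv.Perm α} {s : Finset α} {t : Set α}
    (hf : f.IsCycleOn s) (hne : (↑s ∩ t).Nonempty) (hmaps : Set.MapsTo f (↑s ∩ t) t) :
    ↑s ⊆ t := by
  obtain ⟨x, hx⟩ := hne
  intro y hy
  have hinv : Set.MapsTo f (↑s ∩ t) (↑s ∩ t) := fun z hz ↦ ⟨hf.1.mapsTo hz.1, hmaps hz⟩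
  obtain ⟨k, -, rfl⟩ := hf.exists_pow_eq hx.1 hy
  rw [← Equiv.Perm.iterate_eq_pow]
  exact (hinv.iterate k hx).2

lemma eq_of_isCycleOn_of_eqOn_inter {f g : Equiv.Perm α} {s t : Finset α}
    (hf : f.IsCycleOn s) (hg : g.IsCycleOn t) (hne : (s ∩ t : Set α).Nonempty)
    (hfg : Set.EqOn f g (s ∩ t)) : s = t := by
  refine Subset.antisymm (coe_subset.1 ?_) (coe_subset.1 ?_)
  · refine subset_of_isCycleOn_of_mapsTo hf hne fun x hx ↦ ?_
    rw [hfg hx]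
    exact hg.1.mapsTo hx.2
  · rw [Set.inter_comm] at hne hfg
    refine subset_of_isCycleOn_of_mapsTo hg hne fun x hx ↦ ?_
    rw [← hfg hx]
    exact hf.1.mapsTo hx.2

lemma exists_labels_separating_subsets (P : Finset α) :
    ∃ label : Finset α → α → ℕ,
      (∀ S ⊆ P, ∀ x ∈ S, label S x ∈ Icc 1 #P) ∧
      ∀ S ⊆ P, ∀ T ⊆ P, (S ∩ T : Set α).Nonempty →
        Set.EqOn (label S) (label T) (S ∩ T) → S = T := by
  choose σ hσ _ using fun S : Finset α ↦ S.countable_toSet.exists_cycleOn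
  obtain ⟨rank, hmaps, hinj⟩ : ∃ rank : α → ℕ, ↑P ⊆ rank ⁻¹' Icc 1 #P ∧ Set.InjOn rank P :=
    P.finite_toSet.exists_injOn_of_encard_le <| by
      simp only [Set.encard_coe_eq_coe_finsetCard, Nat.card_Icc, Nat.add_sub_cancel, le_refl]
  refine ⟨fun S x ↦ rank (σ S x), fun S hS x hx ↦ hmaps (hS ((hσ S).1.mapsTo hx)), ?_⟩
  intro S hS T hT hne hagree
  exact eq_of_isCycleOn_of_eqOn_inter (hσ S) (hσ T) hne fun x hx ↦
    hinj (hS ((hσ S).1.mapsTo hx.1)) (hT ((hσ T).1.mapsTo hx.2)) (hagree hx)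

end CyclicOrders

section PrimeFactors

variable {n q : ℕ}

lemma pairwise_coprime_primeFactors (n : ℕ) :
    (n.primeFactors : Set ℕ).Pairwise Nat.Coprime := fun _ hq _ hr hqr ↦
  (Nat.coprime_primes (Nat.prime_of_mem_primeFactors hq)
    (Nat.prime_of_mem_primeFactors hr)).2 hqr

lemma primeFactors_div_of_sq_dvd (h : q ^ 2 ∣ n) : (n / q).primeFactors = n.primeFactors := by
  obtain ⟨m, rfl⟩ := h
  obtain rfl | hq := eq_or_ne q 0
  · simp
  obtain rfl | hm := eq_or_ne m 0
  · simp
  rw [sq, mul_assoc, Nat.mul_div_cancel_left _ (Nat.pos_of_ne_zero hq),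
    Nat.primeFactors_mul hq (mul_ne_zero hq hm), Nat.primeFactors_mul hq hm,
    ← union_assoc, union_self]

lemma card_primeFactors_le_card_primeFactors_div_add_one (hq : q.Prime) (h : q ∣ n) :
    #n.primeFactors ≤ #(n / q).primeFactors + 1 := by
  obtain ⟨m, rfl⟩ := h
  obtain rfl | hm := eq_or_ne m 0
  · simp
  rw [Nat.mul_div_cancel_left _ hq.pos, Nat.primeFactors_mul hq.ne_zero hm, hq.primeFactors,
    add_comm, ← card_singleton q]
  exact card_union_le _ _

lemma card_primeFactors_div_lt_of_minFac (h : #(n / n.minFac).primeFactors < n.minFac)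
    (hq : q ∈ n.primeFactors) : #(n / q).primeFactors < q := by
  have hq_prime := Nat.prime_of_mem_primeFactors hq
  obtain hlt | heq := (Nat.minFac_le_of_dvd hq_prime.two_le
    (Nat.dvd_of_mem_primeFactors hq)).lt_or_eq
  · have hn : n ≠ 1 := by rintro rfl; simp at hq
    calc #(n / q).primeFactors
        ≤ #n.primeFactors := card_le_card <| Nat.primeFactors_mono
          (Nat.div_dvd_of_dvd (Nat.dvd_of_mem_primeFactors hq)) (Nat.mem_primeFactors.1 hq).2.2
      _ ≤ #(n / n.minFac).primeFactors + 1 :=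
          card_primeFactors_le_card_primeFactors_div_add_one (Nat.minFac_prime hn) n.minFac_dvd
      _ ≤ n.minFac := h
      _ < q := hlt
  · rwa [← heq]

end PrimeFactors

section TopDigits

lemma pow_succ_dvd_iff_of_modEq {q u : ℕ} {i x : ℤ} (hq : q ≠ 0)
    (hx : x ≡ q ^ u * i [ZMOD q ^ (u + 1)]) : (q : ℤ) ^ (u + 1) ∣ x ↔ (q : ℤ) ∣ i := by
  rw [hx.dvd_iff, pow_succ, mul_dvd_mul_iff_left (pow_ne_zero u (Nat.cast_ne_zero.2 hq))]

lemma le_of_modEq_pow_mul {q u w i j : ℕ} {x : ℤ} (hi : 0 < i) (hiq : u < w → i < q)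
    (hx : x ≡ q ^ u * i [ZMOD q ^ (u + 1)]) (hx' : x ≡ q ^ w * j [ZMOD q ^ (w + 1)]) :
    w ≤ u := by
  by_contra! huw
  have hx_dvd : (q : ℤ) ^ w ∣ x :=
    (hx'.of_dvd (pow_dvd_pow _ w.le_succ)).dvd_iff.2 (dvd_mul_right _ _)
  have hqi : (q : ℤ) ∣ i :=
    (pow_succ_dvd_iff_of_modEq (hiq huw).ne_bot hx).1 ((pow_dvd_pow _ huw).trans hx_dvd)
  exact Nat.not_dvd_of_pos_of_lt hi (hiq huw) (Int.natCast_dvd_natCast.1 hqi)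

lemma eq_of_modEq_of_mem_Icc {q i j : ℕ} (hi : i ∈ Icc 1 q) (hj : j ∈ Icc 1 q)
    (hij : i ≡ j [MOD q]) : i = j := by
  rw [mem_Icc] at hi hj
  refine hij.eq_of_abs_lt (abs_lt.2 ⟨?_, ?_⟩) <;> omega

lemma eq_and_eq_of_modEq_pow_mul {q u w i j : ℕ} {x : ℤ}
    (hi : i ∈ Icc 1 q) (hj : j ∈ Icc 1 q) (hiq : u < w → i < q) (hjq : w < u → j < q)
    (hx : x ≡ q ^ u * i [ZMOD q ^ (u + 1)]) (hx' : x ≡ q ^ w * j [ZMOD q ^ (w + 1)]) :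
    u = w ∧ i = j := by
  have hi₀ := (mem_Icc.1 hi).1
  obtain rfl : u = w := le_antisymm
    (le_of_modEq_pow_mul (mem_Icc.1 hj).1 hjq hx' hx) (le_of_modEq_pow_mul hi₀ hiq hx hx')
  have hq : (q : ℤ) ^ u ≠ 0 := pow_ne_zero u (by have := (mem_Icc.1 hi).2; omega)
  refine ⟨rfl, eq_of_modEq_of_mem_Icc hi hj (Int.natCast_modEq_iff.1 ?_)⟩
  rw [← Int.ModEq.mul_left_cancel_iff' hq, ← pow_succ]
  exact hx.symm.trans hx'

/-- The residue class `a` modulo `d` has top digits `δ` if, for every prime `q` with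
`q ^ v ∥ d` and `v ≥ 1`, the residue of `a` modulo `q ^ v` has all its base-`q` digits equal to
`0` except the top one, of weight `q ^ (v - 1)`, which is `δ q`. The values `δ q` are meant to lie
in `{1, …, q}`, with `q` standing for the digit `0`: as long as that value is avoided, a residue
class determines the exponent `v`. -/
def HasTopDigits (a : ℤ) (d : ℕ) (δ : ℕ → ℕ) : Prop :=
  ∀ q ∈ d.primeFactors,
    a ≡ q ^ (d.factorization q - 1) * δ q [ZMOD q ^ d.factorization q]

lemma exists_hasTopDigits (d : ℕ) (δ : ℕ → ℕ) : ∃ a : ℤ, HasTopDigits a d δ := by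
  obtain ⟨k, hk⟩ := Nat.chineseRemainderOfFinset
    (fun q ↦ q ^ (d.factorization q - 1) * δ q) (fun q ↦ q ^ d.factorization q) d.primeFactors
    (fun q hq ↦ pow_ne_zero _ (Nat.prime_of_mem_primeFactors hq).ne_zero)
    (fun q hq r hr hqr ↦ (pairwise_coprime_primeFactors d hq hr hqr).pow _ _)
  exact ⟨k, fun q hq ↦ mod_cast Int.natCast_modEq_iff.2 (hk q hq)⟩

lemma HasTopDigits.of_modEq {a x : ℤ} {d : ℕ} {δ : ℕ → ℕ} (ha : HasTopDigits a d δ)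
    (hx : x ≡ a [ZMOD d]) : HasTopDigits x d δ := fun q hq ↦
  (hx.of_dvd (mod_cast Nat.ordProj_dvd d q)).trans (ha q hq)

lemma HasTopDigits.factorization_eq_and_eq {x : ℤ} {d e q : ℕ} {δ ε : ℕ → ℕ}
    (hδ : HasTopDigits x d δ) (hε : HasTopDigits x e ε)
    (hqd : q ∈ d.primeFactors) (hqe : q ∈ e.primeFactors)
    (hδq : δ q ∈ Icc 1 q) (hεq : ε q ∈ Icc 1 q)
    (hδ_lt : q ^ 2 ∣ e → δ q < q) (hε_lt : q ^ 2 ∣ d → ε q < q) :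
    d.factorization q = e.factorization q ∧ δ q = ε q := by
  have hx := hδ q hqd
  have hx' := hε q hqe
  have hd_dvd := Nat.ordProj_dvd d q
  have he_dvd := Nat.ordProj_dvd e q
  rw [← Nat.support_factorization, Finsupp.mem_support_iff] at hqd hqe
  obtain ⟨u, hu⟩ := Nat.exists_eq_succ_of_ne_zero hqd
  obtain ⟨w, hw⟩ := Nat.exists_eq_succ_of_ne_zero hqe
  simp only [hu, hw, Nat.succ_eq_add_one, Nat.add_sub_cancel] at hx hx' hd_dvd he_dvd ⊢
  rw [Nat.add_right_cancel_iff]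
  exact eq_and_eq_of_modEq_pow_mul hδq hεq
    (fun h ↦ hδ_lt ((pow_dvd_pow q (by omega)).trans he_dvd))
    (fun h ↦ hε_lt ((pow_dvd_pow q (by omega)).trans hd_dvd)) hx hx'

end TopDigits

section Nice

variable {n p : ℕ}

lemma overlap_iff_modEq_gcd (c₁ c₂ : ℤ × ℕ) :
    Overlap c₁ c₂ ↔ c₁.1 ≡ c₂.1 [ZMOD (Nat.gcd c₁.2 c₂.2 : ℕ)] := by
  constructor
  · rintro ⟨x, hx₁, hx₂⟩
    exact (hx₁.of_dvd (mod_cast Nat.gcd_dvd_left _ _)).symm.trans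
      (hx₂.of_dvd (mod_cast Nat.gcd_dvd_right _ _))
  · intro h
    obtain ⟨t, ht⟩ := h.dvd
    rw [Nat.gcd_eq_gcd_ab] at ht
    refine ⟨c₁.1 + c₁.2 * (c₁.2.gcdA c₂.2 * t), Int.modEq_add_fac_self, ?_⟩
    exact Int.modEq_iff_dvd.2 ⟨c₁.2.gcdB c₂.2 * t, by linear_combination ht⟩

lemma isNice_iff_coprime_of_overlap (hn : n ≠ 0) :
    IsNice n ↔ ∃ a : ℕ → ℤ, ∀ d e, d ∣ n → e ∣ n → d ≠ e →
      Overlap (a d, d) (a e, e) → d.Coprime e := by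
  refine exists_congr fun a ↦ ⟨fun hgood d e hd he hde hover ↦ ?_, ?_⟩
  · obtain rfl | hd_one := eq_or_ne d 1
    · exact Nat.coprime_one_left e
    obtain rfl | he_one := eq_or_ne e 1
    · exact Nat.coprime_one_right d
    have hd_zero := ne_zero_of_dvd_ne_zero hn hd
    have he_zero := ne_zero_of_dvd_ne_zero hn he
    exact hgood (a d, d) ⟨d, hd, by omega, rfl⟩ (a e, e) ⟨e, he, by omega, rfl⟩
      (fun h ↦ hde (congrArg Prod.snd h)) hover
  · rintro h _ ⟨d, hd, -, rfl⟩ _ ⟨e, he, -, rfl⟩ hne hover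
    exact h d e hd he (fun hde ↦ hne (by rw [hde])) hover

lemma IsNice.card_le_of_pairwise_coprime (hn : n ≠ 0) (hnice : IsNice n) (hp : 1 < p)
    {Q : Finset ℕ} (hQ : ∀ q ∈ Q, p * q ∣ n) (hco : (Q : Set ℕ).Pairwise Nat.Coprime) :
    #Q ≤ p := by
  obtain ⟨a, ha⟩ := (isNice_iff_coprime_of_overlap hn).1 hnice
  have : NeZero p := ⟨by omega⟩
  rw [← ZMod.card p, ← card_univ]
  refine card_le_card_of_injOn (fun q ↦ (a (p * q) : ZMod p)) (fun _ _ ↦ mem_univ _) ?_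
  intro q hq r hr hqr
  by_contra hne
  have hgcd : (p * q).gcd (p * r) = p := by rw [Nat.gcd_mul_left, hco hq hr hne, mul_one]
  have hover : Overlap (a (p * q), p * q) (a (p * r), p * r) := by
    rw [overlap_iff_modEq_gcd, hgcd]
    exact (ZMod.intCast_eq_intCast_iff _ _ _).1 hqr
  have hcoprime := ha _ _ (hQ q hq) (hQ r hr) (by simpa [NeZero.ne p] using hne) hover
  exact hp.ne' (hgcd.symm.trans hcoprime)

theorem IsNice.card_primeFactors_div_lt (hn : n ≠ 0) (hnice : IsNice n) (hp : 1 < p)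
    (hpn : p ∣ n) : #(n / p).primeFactors < p := by
  have hone : 1 ∉ (n / p).primeFactors := fun h ↦
    Nat.not_prime_one (Nat.prime_of_mem_primeFactors h)
  rw [← Nat.succ_le_iff, Nat.succ_eq_add_one, ← card_insert_of_notMem hone]
  refine hnice.card_le_of_pairwise_coprime hn hp ?_ ?_
  · intro q hq
    refine Nat.mul_dvd_of_dvd_div hpn ?_
    obtain rfl | hq := mem_insert.1 hq
    · exact one_dvd _
    · exact Nat.dvd_of_mem_primeFactors hq
  · rw [coe_insert, Set.pairwise_insert_of_symm]
    exact ⟨pairwise_coprime_primeFactors _, fun q _ _ ↦ Nat.coprime_one_left q⟩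

theorem isNice_of_forall_card_primeFactors_div_lt (hn : n ≠ 0)
    (h : ∀ q ∈ n.primeFactors, #(n / q).primeFactors < q) : IsNice n := by
  have hle : ∀ q ∈ n.primeFactors, #n.primeFactors ≤ q := fun q hq ↦
    (card_primeFactors_le_card_primeFactors_div_add_one (Nat.prime_of_mem_primeFactors hq)
      (Nat.dvd_of_mem_primeFactors hq)).trans (h q hq)
  have hlt : ∀ q ∈ n.primeFactors, q ^ 2 ∣ n → #n.primeFactors < q := fun q hq hqn ↦
    primeFactors_div_of_sq_dvd hqn ▸ h q hq
  obtain ⟨label, hlabel, hsep⟩ := exists_labels_separating_subsets n.primeFactors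
  choose a ha using fun d : ℕ ↦ exists_hasTopDigits d (label d.primeFactors)
  refine (isNice_iff_coprime_of_overlap hn).2 ⟨a, fun d e hd he hne ⟨x, hxd, hxe⟩ ↦ ?_⟩
  have hd_zero := ne_zero_of_dvd_ne_zero hn hd
  have he_zero := ne_zero_of_dvd_ne_zero hn he
  have hdP := Nat.primeFactors_mono hd hn
  have heP := Nat.primeFactors_mono he hn
  have hagree : ∀ q ∈ d.primeFactors, q ∈ e.primeFactors →
      d.factorization q = e.factorization q ∧
        label d.primeFactors q = label e.primeFactors q := by
    intro q hqd hqe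
    have hlabel_d := mem_Icc.1 (hlabel _ hdP q hqd)
    have hlabel_e := mem_Icc.1 (hlabel _ heP q hqe)
    have hle_q := hle q (hdP hqd)
    exact ((ha d).of_modEq hxd).factorization_eq_and_eq ((ha e).of_modEq hxe) hqd hqe
      (mem_Icc.2 ⟨hlabel_d.1, hlabel_d.2.trans hle_q⟩)
      (mem_Icc.2 ⟨hlabel_e.1, hlabel_e.2.trans hle_q⟩)
      (fun hqe₂ ↦ hlabel_d.2.trans_lt (hlt q (hdP hqd) (hqe₂.trans he)))
      (fun hqd₂ ↦ hlabel_e.2.trans_lt (hlt q (hdP hqd) (hqd₂.trans hd)))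
  rw [← Nat.disjoint_primeFactors hd_zero he_zero, disjoint_left]
  intro q hqd hqe
  have hsupp : d.primeFactors = e.primeFactors :=
    hsep _ hdP _ heP ⟨q, hqd, hqe⟩ fun r hr ↦ (hagree r hr.1 hr.2).2
  refine hne (Nat.factorization_inj hd_zero he_zero (Finsupp.ext_iff'.2 ⟨hsupp, fun r hr ↦ ?_⟩))
  exact (hagree r hr (hsupp ▸ hr)).1

end Nice

theorem nice_iff (n : ℕ) (hn : 1 < n) :
    IsNice n ↔ (n / n.minFac).primeFactors.card < n.minFac := by
  have hn_zero : n ≠ 0 := by omega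
  constructor
  · intro hnice
    exact hnice.card_primeFactors_div_lt hn_zero (Nat.minFac_prime hn.ne').one_lt n.minFac_dvd
  · intro hcard
    exact isNice_of_forall_card_primeFactors_div_lt hn_zero fun _ ↦
      card_primeFactors_div_lt_of_minFac hcard
end

section
/- Let p_1 < p_2 be primes, let k ≥ 1 be an integer, and let a be an integer with a ≢ 0 (mod p_2) and a · p_1 ≢ 1 (mod p_2). Then the set of congruences {0 (mod p_1)} ∪ { p_2^{i-1} + 1 (mod p_2^i) : 1 ≤ i ≤ k } ∪ { a·p_1·p_2^{i-1} + 1 (mod p_1·p_2^i) : 1 ≤ i ≤ k } is good. -/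
/-! For `u ≢ 0 (mod q)`, the congruence `x ≡ u * q ^ i + 1 (mod q ^ (i + 1))` says that `q ^ i` is
the highest power of `q` dividing `x - 1` and that `(x - 1) / q ^ i ≡ u (mod q)`. Hence `x`
determines `i` and `u` modulo `q`, and such congruences are disjoint unless both agree. With
`q = p₂` this separates any two congruences of the last two families, where `u = 1` and
`u = a * p₁`. Against `0 (mod p₁)`, the second family has coprime moduli, while the third reduces to
`1 (mod p₁)`. -/

theorem Overlap.symm {c₁ c₂ : ℤ × ℕ} (h : Overlap c₁ c₂) : Overlap c₂ c₁ :=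
  let ⟨x, hx₁, hx₂⟩ := h
  ⟨x, hx₂, hx₁⟩

theorem Overlap.modEq_of_dvd {c₁ c₂ : ℤ × ℕ} (h : Overlap c₁ c₂) {d : ℕ}
    (hd₁ : d ∣ c₁.2) (hd₂ : d ∣ c₂.2) : c₁.1 ≡ c₂.1 [ZMOD d] :=
  let ⟨_, hx₁, hx₂⟩ := h
  (hx₁.symm.of_dvd (Int.natCast_dvd_natCast.2 hd₁)).trans
    (hx₂.of_dvd (Int.natCast_dvd_natCast.2 hd₂))

theorem IsGood.mono {A B : Set (ℤ × ℕ)} (hAB : A ⊆ B) (hB : IsGood B) : IsGood A :=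
  fun c₁ h₁ c₂ h₂ ↦ hB c₁ (hAB h₁) c₂ (hAB h₂)

theorem isGood_singleton (c : ℤ × ℕ) : IsGood {c} :=
  Set.pairwise_singleton c _

theorem IsGood.union {A B : Set (ℤ × ℕ)} (hA : IsGood A) (hB : IsGood B)
    (hAB : ∀ c₁ ∈ A, ∀ c₂ ∈ B, Overlap c₁ c₂ → Nat.Coprime c₁.2 c₂.2) : IsGood (A ∪ B) := by
  rintro c₁ (h₁ | h₁) c₂ (h₂ | h₂) hne hov
  · exact hA c₁ h₁ c₂ h₂ hne hov
  · exact hAB c₁ h₁ c₂ h₂ hov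
  · exact (hAB c₂ h₂ c₁ h₁ hov.symm).symm
  · exact hB c₁ h₁ c₂ h₂ hne hov

/-- The congruence `u * q ^ i + 1 (mod n * q ^ (i + 1))`. For `u ≢ 0 (mod q)` it forces `x - 1` to
end in exactly `i` zeros in base `q`, preceded by the digit `u`; the factor `n` covers the moduli
`p₁ * p₂ ^ i`. The exponent is one less than the paper's, which avoids the truncated `i - 1`. -/
def leadingDigitCongr (q : ℕ) (u : ℤ) (n i : ℕ) : ℤ × ℕ :=
  (u * (q : ℤ) ^ i + 1, n * q ^ (i + 1))

section LeadingDigit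

variable {q m n i j : ℕ} {u v : ℤ}

theorem Overlap.digit_modEq_mul_pow_sub (hq : q ≠ 0) (hij : i ≤ j)
    (h : Overlap (leadingDigitCongr q u m i) (leadingDigitCongr q v n j)) :
    u ≡ v * (q : ℤ) ^ (j - i) [ZMOD q] := by
  have hres : u * (q : ℤ) ^ i + 1 ≡ v * (q : ℤ) ^ j + 1 [ZMOD (q ^ (i + 1) : ℕ)] :=
    h.modEq_of_dvd (Dvd.intro_left m rfl) ((pow_dvd_pow q (by lia)).mul_left n)
  have hscaled : u * (q : ℤ) ^ i ≡ v * (q : ℤ) ^ (j - i) * (q : ℤ) ^ i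
      [ZMOD q * (q : ℤ) ^ i] := by
    rw [mul_assoc, pow_sub_mul_pow _ hij, ← pow_succ', ← Nat.cast_pow q (i + 1)]
    exact hres.add_right_cancel' 1
  exact hscaled.mul_right_cancel' (pow_ne_zero i (Nat.cast_ne_zero.2 hq))

theorem Overlap.exponent_le (hq : q ≠ 0) (hu : ¬ u ≡ 0 [ZMOD q])
    (h : Overlap (leadingDigitCongr q u m i) (leadingDigitCongr q v n j)) : j ≤ i := by
  by_contra! hij
  have hpow : v * (q : ℤ) ^ (j - i) ≡ 0 [ZMOD q] :=
    Int.modEq_zero_iff_dvd.2 ((dvd_pow_self _ (Nat.sub_ne_zero_of_lt hij)).mul_left v)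
  exact hu ((h.digit_modEq_mul_pow_sub hq hij.le).trans hpow)

theorem Overlap.exponent_eq (hq : q ≠ 0) (hu : ¬ u ≡ 0 [ZMOD q]) (hv : ¬ v ≡ 0 [ZMOD q])
    (h : Overlap (leadingDigitCongr q u m i) (leadingDigitCongr q v n j)) : i = j :=
  (h.symm.exponent_le hq hv).antisymm (h.exponent_le hq hu)

theorem Overlap.digit_modEq (hq : q ≠ 0) (hu : ¬ u ≡ 0 [ZMOD q]) (hv : ¬ v ≡ 0 [ZMOD q])
    (h : Overlap (leadingDigitCongr q u m i) (leadingDigitCongr q v n j)) : u ≡ v [ZMOD q] := by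
  obtain rfl := h.exponent_eq hq hu hv
  simpa using h.digit_modEq_mul_pow_sub hq le_rfl

theorem isGood_range_leadingDigitCongr (hq : q ≠ 0) (hu : ¬ u ≡ 0 [ZMOD q]) :
    IsGood (Set.range (leadingDigitCongr q u n)) := by
  rintro _ ⟨i, rfl⟩ _ ⟨j, rfl⟩ hne hov
  exact absurd (congrArg _ (hov.exponent_eq hq hu hu)) hne

end LeadingDigit

theorem not_mul_modEq_zero_of_isCoprime {a b m : ℤ} (hbm : IsCoprime b m)
    (ha : ¬ a ≡ 0 [ZMOD m]) : ¬ a * b ≡ 0 [ZMOD m] := by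
  rw [Int.modEq_zero_iff_dvd] at ha ⊢
  exact fun h ↦ ha (hbm.symm.dvd_of_dvd_mul_right h)

theorem eq_one_of_overlap_leadingDigitCongr {p q i : ℕ} {a : ℤ}
    (h : Overlap (0, p) (leadingDigitCongr q (a * p) p i)) : p = 1 := by
  have hmod : 0 ≡ a * p * (q : ℤ) ^ i + 1 [ZMOD p] :=
    h.modEq_of_dvd dvd_rfl (Dvd.intro _ rfl)
  have hdvd : (p : ℤ) ∣ a * p * (q : ℤ) ^ i + 1 := Int.modEq_zero_iff_dvd.1 hmod.symm
  have hone : (p : ℤ) ∣ 1 := (dvd_add_right ((dvd_mul_left _ a).mul_right _)).1 hdvd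
  exact Nat.dvd_one.1 (by exact_mod_cast hone)

theorem primeTimesPrimePow_good_general (p q : ℕ) (a : ℤ) (hq : q ≠ 0) (hpq : p.Coprime q)
    (ha₀ : ¬ a ≡ 0 [ZMOD (q : ℤ)]) (ha₁ : ¬ a * (p : ℤ) ≡ 1 [ZMOD (q : ℤ)]) :
    IsGood ({((0 : ℤ), p)} ∪
      {c : ℤ × ℕ | ∃ i : ℕ, 1 ≤ i ∧ c = ((q : ℤ) ^ (i - 1) + 1, q ^ i)} ∪
      {c : ℤ × ℕ | ∃ i : ℕ, 1 ≤ i ∧ c = (a * (p : ℤ) * (q : ℤ) ^ (i - 1) + 1, p * q ^ i)}) := by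
  have hap : ¬ a * p ≡ 0 [ZMOD q] := not_mul_modEq_zero_of_isCoprime hpq.isCoprime ha₀
  have hone : ¬ 1 ≡ 0 [ZMOD q] := fun h ↦ ha₀ (by simpa using h.mul_left a)
  have hgood : IsGood ({(0, p)} ∪ Set.range (leadingDigitCongr q 1 1) ∪
      Set.range (leadingDigitCongr q (a * p) p)) := by
    refine ((isGood_singleton _).union (isGood_range_leadingDigitCongr hq hone) ?_).union
      (isGood_range_leadingDigitCongr hq hap) ?_
    · rintro _ rfl _ ⟨i, rfl⟩ -
      simpa [leadingDigitCongr] using hpq.pow_right (i + 1)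
    · rintro _ (rfl | ⟨i, rfl⟩) _ ⟨j, rfl⟩ hov
      · simp [eq_one_of_overlap_leadingDigitCongr hov]
      · exact absurd (hov.digit_modEq hq hone hap).symm ha₁
  refine hgood.mono (Set.union_subset_union (Set.union_subset_union_right _ ?_) ?_) <;>
  · rintro _ ⟨i, hi, rfl⟩
    exact ⟨i - 1, by simp [leadingDigitCongr, Nat.sub_add_cancel hi]⟩

theorem primeTimesPrimePow_good (p₁ p₂ k : ℕ) (a : ℤ) (hp₁ : p₁.Prime)
    (hp₂ : p₂.Prime) (hlt : p₁ < p₂) (hk : 1 ≤ k)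
    (ha₀ : ¬ a ≡ 0 [ZMOD (p₂ : ℤ)]) (ha₁ : ¬ a * (p₁ : ℤ) ≡ 1 [ZMOD (p₂ : ℤ)]) :
    IsGood ({((0 : ℤ), p₁)} ∪
      {c : ℤ × ℕ | ∃ i : ℕ, 1 ≤ i ∧ i ≤ k ∧ c = ((p₂ : ℤ) ^ (i - 1) + 1, p₂ ^ i)} ∪
      {c : ℤ × ℕ | ∃ i : ℕ, 1 ≤ i ∧ i ≤ k ∧
        c = (a * (p₁ : ℤ) * (p₂ : ℤ) ^ (i - 1) + 1, p₁ * p₂ ^ i)}) :=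
  (primeTimesPrimePow_good_general p₁ p₂ a hp₂.ne_zero
    ((Nat.coprime_primes hp₁ hp₂).2 hlt.ne) ha₀ ha₁).mono (by gcongr <;> tauto)
end

section
/- Let n = p_1^{α_1} · p_2^{α_2} · ... · p_t^{α_t} where p_1 < p_2 < ... < p_t are primes, t ≥ 3, α_k ≥ 1 for all k, and t ≤ p_1 - 1. Then n is nice. -/
/-!
For every finite set of primes fix a cyclic permutation of it. Choose `a d` so that, for each prime
`p ∣ d` with `p ^ k` exactly dividing `d`, the residue of `a d` modulo `p ^ k` is `c * p ^ (k - 1)`,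
where the digit `0 < c < p` is the label of the prime that follows `p` in the cycle on the primes
of `d`. Labels `1, …, t` are available because every prime exceeds the number `t` of primes.

If an integer `x` satisfies both `x ≡ a d (mod d)` and `x ≡ a e (mod e)`, then at each common prime
the valuation and the trailing digit of `x` are determined by either congruence: the exponents in
`d` and `e` agree, and so do the successors. Hence one common prime leads around both cycles, and
`d = e`.
-/

/-- The lowest nonzero digit of `x` in base `q` is `c`, and it stands at the place `q ^ v`.
Since `x` determines both `v` and `c`, congruences that prescribe different values of them are
disjoint. -/
structure HasTrailingDigit (q v c : ℕ) (x : ℤ) : Prop where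
  digit_pos : 0 < c
  digit_lt : c < q
  modEq : x ≡ c * (q : ℤ) ^ v [ZMOD (q : ℤ) ^ (v + 1)]

namespace HasTrailingDigit

variable {q v w b c : ℕ} {x y : ℤ}

theorem base_pow_ne_zero (h : HasTrailingDigit q v c x) : (q : ℤ) ^ v ≠ 0 :=
  pow_ne_zero v (Nat.cast_ne_zero.mpr (h.digit_pos.trans h.digit_lt).ne')

theorem emultiplicity_eq (h : HasTrailingDigit q v c x) : emultiplicity (q : ℤ) x = v := by
  refine emultiplicity_eq_coe.mpr ⟨?_, fun hdvd => ?_⟩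
  · exact (h.modEq.of_dvd (pow_dvd_pow _ v.le_succ)).dvd_iff.mpr (dvd_mul_left _ _)
  · have hdvd_digit : (q : ℤ) ^ v * q ∣ q ^ v * c := by
      rw [← pow_succ, mul_comm _ (c : ℤ)]
      exact h.modEq.dvd_iff.mp hdvd
    have hqc : q ∣ c :=
      Int.natCast_dvd_natCast.mp (Int.dvd_of_mul_dvd_mul_left h.base_pow_ne_zero hdvd_digit)
    exact (Nat.le_of_dvd h.digit_pos hqc).not_gt h.digit_lt

theorem unique (hb : HasTrailingDigit q v b x) (hc : HasTrailingDigit q w c x) :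
    v = w ∧ b = c := by
  obtain rfl : v = w := by exact_mod_cast hb.emultiplicity_eq.symm.trans hc.emultiplicity_eq
  have hbc : (q : ℤ) ^ v * b ≡ q ^ v * c [ZMOD q ^ v * q] := by
    simpa only [mul_comm, pow_succ] using hb.modEq.symm.trans hc.modEq
  have hmod : b ≡ c [MOD q] := Int.natCast_modEq_iff.mp (hbc.mul_left_cancel' hb.base_pow_ne_zero)
  exact ⟨rfl, hmod.eq_of_lt_of_lt hb.digit_lt hc.digit_lt⟩

theorem of_modEq_factorization {d p : ℕ} (hp : p ∈ d.primeFactors)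
    (h : HasTrailingDigit p (d.factorization p - 1) c y) (hxy : x ≡ y [ZMOD d]) :
    HasTrailingDigit p (d.factorization p - 1) c x := by
  obtain ⟨hprime, hpd, hd⟩ := Nat.mem_primeFactors.mp hp
  have hpow : p ^ (d.factorization p - 1 + 1) ∣ d := by
    rw [Nat.sub_add_cancel (hprime.factorization_pos_of_dvd hd hpd)]
    exact Nat.ordProj_dvd d p
  have hxy' : x ≡ y [ZMOD (p : ℤ) ^ (d.factorization p - 1 + 1)] :=
    hxy.of_dvd (by exact_mod_cast hpow)
  exact ⟨h.digit_pos, h.digit_lt, hxy'.trans h.modEq⟩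

theorem factorization_eq_and_digit_eq_of_overlap {d e p : ℕ} (hpd : p ∈ d.primeFactors)
    (hpe : p ∈ e.primeFactors) (hb : HasTrailingDigit p (d.factorization p - 1) b x)
    (hc : HasTrailingDigit p (e.factorization p - 1) c y) (hover : Overlap (x, d) (y, e)) :
    d.factorization p = e.factorization p ∧ b = c := by
  obtain ⟨z, hzx, hzy⟩ := hover
  obtain ⟨hexp, hdigit⟩ :=
    (hb.of_modEq_factorization hpd hzx).unique (hc.of_modEq_factorization hpe hzy)
  rw [← Nat.support_factorization, Finsupp.mem_support_iff] at hpd hpe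
  exact ⟨by omega, hdigit⟩

end HasTrailingDigit

theorem exists_forall_hasTrailingDigit {S : Finset ℕ} (hS : (S : Set ℕ).Pairwise Nat.Coprime)
    (v c : ℕ → ℕ) (hc : ∀ q ∈ S, 0 < c q ∧ c q < q) :
    ∃ x : ℤ, ∀ q ∈ S, HasTrailingDigit q (v q) (c q) x := by
  obtain ⟨x, hx⟩ := Nat.chineseRemainderOfFinset
    (fun q => c q * q ^ v q) (fun q => q ^ (v q + 1)) S
    (fun q hq => pow_ne_zero _ ((hc q hq).1.trans (hc q hq).2).ne')
    (fun q hq r hr hqr => (hS hq hr hqr).pow _ _)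
  exact ⟨x, fun q hq => ⟨(hc q hq).1, (hc q hq).2,
    by exact_mod_cast Int.natCast_modEq_iff.mpr (hx q hq)⟩⟩

section Labellings

variable {α : Type*} [DecidableEq α]

/-- A labelling `c s : α → ℕ` of each finite set `s` separates the subsets of `P` if two of
them that have a common element, and whose labels agree on all common elements, are equal. With
trailing digits as labels, this is what makes congruences to non-coprime moduli disjoint. -/
def SeparatesSubsets (P : Finset α) (c : Finset α → α → ℕ) : Prop :=
  ∀ s ⊆ P, ∀ t ⊆ P, (s ∩ t).Nonempty → (∀ a ∈ s ∩ t, c s a = c t a) → s = t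

theorem subset_of_isCycleOn_of_eqOn_inter {s t : Finset α} {f g : Equiv.Perm α}
    (hf : f.IsCycleOn s) (hg : Set.MapsTo g t t) (hne : (s ∩ t).Nonempty)
    (hfg : ∀ a ∈ s ∩ t, f a = g a) : s ⊆ t := by
  obtain ⟨a, ha⟩ := hne
  have hmaps : Set.MapsTo f (s ∩ t : Finset α) (s ∩ t : Finset α) := by
    intro b hb
    obtain ⟨hbs, hbt⟩ := Finset.mem_inter.mp hb
    exact Finset.mem_inter.mpr ⟨hf.1.mapsTo hbs, hfg b hb ▸ hg hbt⟩
  intro b hb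
  obtain ⟨n, -, rfl⟩ := hf.exists_pow_eq (Finset.mem_inter.mp ha).1 hb
  exact (Finset.mem_inter.mp (hmaps.perm_pow n ha)).2

theorem exists_separatesSubsets (P : Finset α) :
    ∃ c : Finset α → α → ℕ,
      (∀ s ⊆ P, ∀ a ∈ s, 0 < c s a ∧ c s a ≤ P.card) ∧ SeparatesSubsets P c := by
  choose σ hσ _ using fun s : Finset α => s.countable_toSet.exists_cycleOn
  have hmem {s : Finset α} (hs : s ⊆ P) {a : α} (ha : a ∈ s) : σ s a ∈ P.toList :=
    Finset.mem_toList.mpr (hs ((hσ s).1.mapsTo ha))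
  refine ⟨fun s a => P.toList.idxOf (σ s a) + 1, fun s hs a ha => ⟨Nat.succ_pos _, ?_⟩, ?_⟩
  · exact Nat.succ_le_of_lt (P.length_toList ▸ List.idxOf_lt_length_of_mem (hmem hs ha))
  · intro s hs t _ hne hlabel
    have hsucc : ∀ a ∈ s ∩ t, σ s a = σ t a := fun a ha =>
      (List.idxOf_inj (hmem hs (Finset.mem_inter.mp ha).1)).mp (Nat.succ_injective (hlabel a ha))
    apply Finset.Subset.antisymm
    · exact subset_of_isCycleOn_of_eqOn_inter (hσ s) (hσ t).1.mapsTo hne hsucc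
    · rw [Finset.inter_comm] at hne hsucc
      exact subset_of_isCycleOn_of_eqOn_inter (hσ t) (hσ s).1.mapsTo hne
        fun a ha => (hsucc a ha).symm

end Labellings

theorem primeFactors_prod_pow_subset {ι : Type*} (s : Finset ι) {p : ι → ℕ}
    (hp : ∀ k ∈ s, (p k).Prime) (α : ι → ℕ) :
    (∏ k ∈ s, p k ^ α k).primeFactors ⊆ s.image p := by
  intro r hr
  have hr_prime : r.Prime := Nat.prime_of_mem_primeFactors hr
  obtain ⟨k, hk, hrk⟩ :=
    (hr_prime.prime.dvd_finsetProd_iff _).mp (Nat.dvd_of_mem_primeFactors hr)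
  have hr_eq : r = p k :=
    (Nat.prime_dvd_prime_iff_eq hr_prime (hp k hk)).mp (hr_prime.dvd_of_dvd_pow hrk)
  exact Finset.mem_image.mpr ⟨k, hk, hr_eq.symm⟩

theorem eq_of_primeFactors_eq_of_factorization_eq {d e : ℕ} (hd : d ≠ 0) (he : e ≠ 0)
    (hprimes : d.primeFactors = e.primeFactors)
    (hexp : ∀ p ∈ d.primeFactors, d.factorization p = e.factorization p) : d = e := by
  refine Nat.eq_of_factorization_eq' hd he (Finsupp.ext_iff'.mpr ⟨?_, ?_⟩)
  · simpa only [Nat.support_factorization] using hprimes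
  · simpa only [Nat.support_factorization] using hexp

theorem isNice_of_eq_of_overlap_of_not_coprime {n : ℕ} (a : ℕ → ℤ)
    (h : ∀ d e : ℕ, d ∣ n → e ∣ n → Overlap (a d, d) (a e, e) → ¬ d.Coprime e → d = e) :
    IsNice n := by
  refine ⟨a, ?_⟩
  rintro _ ⟨d, hd, -, rfl⟩ _ ⟨e, he, -, rfl⟩ hne hover
  by_contra hcop
  obtain rfl := h d e hd he hover hcop
  exact hne rfl

theorem isNice_of_separatesSubsets {n : ℕ} (hn : n ≠ 0) {c : Finset ℕ → ℕ → ℕ}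
    (hdigit : ∀ s ⊆ n.primeFactors, ∀ p ∈ s, 0 < c s p ∧ c s p < p)
    (hsep : SeparatesSubsets n.primeFactors c) : IsNice n := by
  have hres : ∀ d, d ∣ n → ∃ x : ℤ, ∀ p ∈ d.primeFactors,
      HasTrailingDigit p (d.factorization p - 1) (c d.primeFactors p) x := fun d hd =>
    exists_forall_hasTrailingDigit
      (fun p hp q hq => (Nat.coprime_primes (Nat.prime_of_mem_primeFactors hp)
        (Nat.prime_of_mem_primeFactors hq)).mpr)
      _ _ (hdigit _ (Nat.primeFactors_mono hd hn))
  choose! a ha using hres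
  refine isNice_of_eq_of_overlap_of_not_coprime a fun d e hd he hover hcop => ?_
  have hd0 : d ≠ 0 := ne_zero_of_dvd_ne_zero hn hd
  have he0 : e ≠ 0 := ne_zero_of_dvd_ne_zero hn he
  have hagree : ∀ p ∈ d.primeFactors ∩ e.primeFactors,
      d.factorization p = e.factorization p ∧ c d.primeFactors p = c e.primeFactors p := by
    intro p hp
    obtain ⟨hpd, hpe⟩ := Finset.mem_inter.mp hp
    exact (ha d hd p hpd).factorization_eq_and_digit_eq_of_overlap hpd hpe (ha e he p hpe) hover
  have hprimes : d.primeFactors = e.primeFactors := by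
    refine hsep _ (Nat.primeFactors_mono hd hn) _ (Nat.primeFactors_mono he hn) ?_
      fun p hp => (hagree p hp).2
    rwa [← Finset.not_disjoint_iff_nonempty_inter, Nat.disjoint_primeFactors hd0 he0]
  exact eq_of_primeFactors_eq_of_factorization_eq hd0 he0 hprimes fun p hp =>
    (hagree p (Finset.mem_inter.mpr ⟨hp, hprimes ▸ hp⟩)).1

theorem case1_nice_general {n : ℕ} (hn : n ≠ 0)
    (h : ∀ p ∈ n.primeFactors, n.primeFactors.card < p) :
    IsNice n := by
  obtain ⟨c, hc, hsep⟩ := exists_separatesSubsets n.primeFactors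
  exact isNice_of_separatesSubsets hn
    (fun s hs p hp => ⟨(hc s hs p hp).1, (hc s hs p hp).2.trans_lt (h p (hs hp))⟩) hsep

theorem case1_nice (t : ℕ) (ht : 3 ≤ t) (p : Fin t → ℕ) (hp : ∀ k, (p k).Prime)
    (hmono : StrictMono p) (α : Fin t → ℕ) (hα : ∀ k, 1 ≤ α k)
    (htp : t ≤ p ⟨0, by omega⟩ - 1) :
    IsNice (∏ k, p k ^ α k) := by
  have hsub := primeFactors_prod_pow_subset Finset.univ (fun k _ => hp k) α
  refine case1_nice_general (Finset.prod_ne_zero_iff.mpr fun k _ => pow_ne_zero _ (hp k).ne_zero) ?_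
  intro r hr
  obtain ⟨k, -, rfl⟩ := Finset.mem_image.mp (hsub hr)
  calc (∏ k, p k ^ α k).primeFactors.card
      ≤ (Finset.univ.image p).card := Finset.card_le_card hsub
    _ ≤ (Finset.univ : Finset (Fin t)).card := Finset.card_image_le
    _ = t := Finset.card_fin t
    _ < p ⟨0, by omega⟩ := by omega
    _ ≤ p k := hmono.monotone (Fin.mk_le_of_le_val (Nat.zero_le _))
end

section
/- The integer n = 3 · 5^2 · 7^2 = 3675 is nice. -/
namespace Overlap

theorem modEq_of_dvd_s15 {c₁ c₂ : ℤ × ℕ} (h : Overlap c₁ c₂) {m : ℕ} (h₁ : m ∣ c₁.2) (h₂ : m ∣ c₂.2) :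
    c₁.1 ≡ c₂.1 [ZMOD m] := by
  obtain ⟨x, hx₁, hx₂⟩ := h
  exact (hx₁.of_dvd (mod_cast h₁)).symm.trans (hx₂.of_dvd (mod_cast h₂))

end Overlap

theorem isNice_of_exists_not_modEq {n : ℕ} (a : ℕ → ℤ)
    (ha : ∀ d e, d ∣ n → e ∣ n → d ≠ e → ¬ d.Coprime e →
      ∃ m, m ∣ d ∧ m ∣ e ∧ ¬ a d ≡ a e [ZMOD m]) :
    IsNice n := by
  refine ⟨a, ?_⟩
  rintro _ ⟨d, hd, -, rfl⟩ _ ⟨e, he, -, rfl⟩ hne hoverlap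
  by_contra hcop
  have hde : d ≠ e := fun h ↦ hne (by rw [h])
  obtain ⟨m, hmd, hme, hm⟩ := ha d e hd he hde hcop
  exact hm (hoverlap.modEq_of_dvd_s15 hmd hme)

theorem exists_forall_modEq_ordProj (d : ℕ) (r : ℕ → ℕ) :
    ∃ x, ∀ p ∈ d.primeFactors, x ≡ r p [MOD ordProj[p] d] :=
  let ⟨x, hx⟩ := Nat.chineseRemainderOfFinset r (fun p ↦ ordProj[p] d) d.primeFactors
    (fun _ hp ↦ pow_ne_zero _ (Nat.prime_of_mem_primeFactors hp).ne_zero)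
    fun _ hp _ hq hpq ↦ Nat.coprime_pow_primes _ _ (Nat.prime_of_mem_primeFactors hp)
      (Nat.prime_of_mem_primeFactors hq) hpq
  ⟨x, hx⟩

theorem mul_pow_modEq_mul_pow_iff {p : ℕ} (hp : p ≠ 0) {c c' k : ℕ} :
    c * p ^ k ≡ c' * p ^ k [MOD p ^ (k + 1)] ↔ c ≡ c' [MOD p] := by
  rw [pow_succ']
  exact Nat.ModEq.mul_right_cancel_iff' (pow_ne_zero k hp)

theorem not_mul_pow_modEq_mul_pow_of_lt {p : ℕ} (hp : p ≠ 0) {c c' k l : ℕ} (hc : ¬ p ∣ c)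
    (hkl : k < l) : ¬ c * p ^ k ≡ c' * p ^ l [MOD p ^ (k + 1)] := by
  intro h
  have hdvd : p ^ (k + 1) ∣ c * p ^ k :=
    (h.dvd_iff dvd_rfl).2 (dvd_mul_of_dvd_right (pow_dvd_pow p hkl) c')
  rw [pow_succ'] at hdvd
  exact hc (Nat.dvd_of_mul_dvd_mul_right (pow_pos (Nat.pos_of_ne_zero hp) k) hdvd)

/-- The residue modulo `p ^ k` whose top base-`p` digit is the colour `c` (modulo `p`) and whose
other digits vanish. It is the residue chosen for a divisor with exponent `k` at `p`, where
`0 < k`. -/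
def topDigitResidue (p k c : ℕ) : ℕ := c * p ^ (k - 1)

theorem not_topDigitResidue_modEq {p k l c c' : ℕ} (hp : p ≠ 0) (hk : k ≠ 0) (hl : l ≠ 0)
    (hcolor : k = l → ¬ c ≡ c' [MOD p]) (hunit : k ≠ l → ¬ p ∣ c ∧ ¬ p ∣ c') :
    ¬ topDigitResidue p k c ≡ topDigitResidue p l c' [MOD p ^ min k l] := by
  obtain ⟨k, rfl⟩ := Nat.exists_eq_succ_of_ne_zero hk
  obtain ⟨l, rfl⟩ := Nat.exists_eq_succ_of_ne_zero hl
  simp only [topDigitResidue, Nat.succ_eq_add_one, Nat.add_sub_cancel]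
  rcases lt_trichotomy k l with hkl | rfl | hlk
  · rw [min_eq_left (by lia)]
    exact not_mul_pow_modEq_mul_pow_of_lt hp (hunit (by lia)).1 hkl
  · rw [min_self, mul_pow_modEq_mul_pow_iff hp]
    exact hcolor rfl
  · rw [min_eq_right (by lia), Nat.ModEq.comm]
    exact not_mul_pow_modEq_mul_pow_of_lt hp (hunit (by lia)).2 hlk

/-- A colouring `c` of the subsets of a finite set `P` of primes: `c S p` is the colour of `S` at
`p ∈ S`, and only its class modulo `p` matters. It separates when any two different intersecting
subsets differ in colour at a common prime. In the application `S` is the set of prime factors of a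
divisor. -/
def IsSeparatingColoring (P : Finset ℕ) (c : Finset ℕ → ℕ → ℕ) : Prop :=
  ∀ S ⊆ P, ∀ T ⊆ P, S ≠ T → (S ∩ T).Nonempty → ∃ p ∈ S ∩ T, ¬ c S p ≡ c T p [MOD p]

theorem sq_dvd_of_factorization_ne {n d e p : ℕ} (hd : d ∣ n) (he : e ∣ n)
    (hpd : d.factorization p ≠ 0) (hpe : e.factorization p ≠ 0)
    (hne : d.factorization p ≠ e.factorization p) : p ^ 2 ∣ n := by
  rcases hne.lt_or_gt with hlt | hlt
  · exact ((pow_dvd_pow p (by lia)).trans (Nat.ordProj_dvd e p)).trans he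
  · exact ((pow_dvd_pow p (by lia)).trans (Nat.ordProj_dvd d p)).trans hd

namespace IsSeparatingColoring

theorem exists_not_modEq_of_factorization_eq {n : ℕ} {c : Finset ℕ → ℕ → ℕ}
    (hc : IsSeparatingColoring n.primeFactors c) (hn : n ≠ 0) {d e : ℕ} (hd : d ∣ n) (he : e ∣ n)
    (hne : d ≠ e) (hcop : ¬ d.Coprime e) :
    ∃ p ∈ d.primeFactors ∩ e.primeFactors, d.factorization p = e.factorization p →
      ¬ c d.primeFactors p ≡ c e.primeFactors p [MOD p] := by
  have hd₀ := ne_zero_of_dvd_ne_zero hn hd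
  have he₀ := ne_zero_of_dvd_ne_zero hn he
  by_cases hsupp : d.primeFactors = e.primeFactors
  · obtain ⟨p, hp⟩ : ∃ p, d.factorization p ≠ e.factorization p := by
      contrapose! hne
      exact Nat.eq_of_factorization_eq hd₀ he₀ hne
    have hpd : p ∈ d.primeFactors := by
      by_contra hpd
      have hpe : p ∉ e.primeFactors := hsupp ▸ hpd
      rw [← Nat.support_factorization, Finsupp.notMem_support_iff] at hpd hpe
      exact hp (hpd.trans hpe.symm)
    exact ⟨p, Finset.mem_inter.2 ⟨hpd, hsupp ▸ hpd⟩, fun h ↦ absurd h hp⟩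
  · have hinter : (d.primeFactors ∩ e.primeFactors).Nonempty := by
      rwa [← Finset.not_disjoint_iff_nonempty_inter, Nat.disjoint_primeFactors hd₀ he₀]
    obtain ⟨p, hp, hcp⟩ := hc _ (Nat.primeFactors_mono hd hn) _ (Nat.primeFactors_mono he hn)
      hsupp hinter
    exact ⟨p, hp, fun _ ↦ hcp⟩

theorem isNice {n : ℕ} {c : Finset ℕ → ℕ → ℕ}
    (hc : IsSeparatingColoring n.primeFactors c) (hn : n ≠ 0)
    (hunit : ∀ S ⊆ n.primeFactors, ∀ p ∈ S, p ^ 2 ∣ n → ¬ p ∣ c S p) : IsNice n := by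
  choose a ha using fun d ↦ exists_forall_modEq_ordProj d
    fun p ↦ topDigitResidue p (d.factorization p) (c d.primeFactors p)
  refine isNice_of_exists_not_modEq (fun d ↦ a d) fun d e hd he hne hcop ↦ ?_
  obtain ⟨p, hp, hcp⟩ := hc.exists_not_modEq_of_factorization_eq hn hd he hne hcop
  obtain ⟨hpd, hpe⟩ := Finset.mem_inter.1 hp
  have hvd : d.factorization p ≠ 0 := Finsupp.mem_support_iff.1 hpd
  have hve : e.factorization p ≠ 0 := Finsupp.mem_support_iff.1 hpe
  have hmd := pow_dvd_pow p (min_le_left (d.factorization p) (e.factorization p))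
  have hme := pow_dvd_pow p (min_le_right (d.factorization p) (e.factorization p))
  refine ⟨p ^ min (d.factorization p) (e.factorization p), hmd.trans (Nat.ordProj_dvd d p),
    hme.trans (Nat.ordProj_dvd e p), fun hade ↦ ?_⟩
  refine not_topDigitResidue_modEq (Nat.prime_of_mem_primeFactors hpd).ne_zero hvd hve hcp
    (fun hv ↦ ?_) (((ha d p hpd).of_dvd hmd).symm.trans
      ((Int.natCast_modEq_iff.1 hade).trans ((ha e p hpe).of_dvd hme)))
  have hsq := sq_dvd_of_factorization_ne hd he hvd hve hv
  exact ⟨hunit _ (Nat.primeFactors_mono hd hn) p hpd hsq,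
    hunit _ (Nat.primeFactors_mono he hn) p hpe hsq⟩

end IsSeparatingColoring

/-- The colouring of the subsets of a three-element cycle: the colour of `i` in `S` tells whether
`i + 1 ∈ S`, and if not, whether `i - 1 ∈ S`. The colours start at `1` so that they are nonzero
modulo every prime above `3`. -/
def cyclicColor (S : Finset (ZMod 3)) (i : ZMod 3) : ℕ :=
  if i + 1 ∈ S then 1 else if i - 1 ∈ S then 2 else 3

theorem cyclicColor_mem_Icc (S : Finset (ZMod 3)) (i : ZMod 3) :
    cyclicColor S i ∈ Finset.Icc 1 3 := by
  unfold cyclicColor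
  split_ifs <;> decide

theorem add_one_mem_iff_of_cyclicColor_eq {S T : Finset (ZMod 3)} {i : ZMod 3}
    (h : cyclicColor S i = cyclicColor T i) : i + 1 ∈ S ↔ i + 1 ∈ T := by
  grind [cyclicColor]

theorem sub_one_mem_iff_of_cyclicColor_eq {S T : Finset (ZMod 3)} {i : ZMod 3}
    (h : cyclicColor S i = cyclicColor T i) (hS : i + 1 ∉ S) : i - 1 ∈ S ↔ i - 1 ∈ T := by
  grind [cyclicColor]

theorem exists_cyclicColor_ne {S T : Finset (ZMod 3)} (hne : S ≠ T) (hST : (S ∩ T).Nonempty) :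
    ∃ i ∈ S ∩ T, cyclicColor S i ≠ cyclicColor T i := by
  -- If the colours agree at `i ∈ S ∩ T`, then `S` and `T` agree at `i + 1`, and either they agree
  -- at `i - 1` too or `i + 1 ∈ S ∩ T`, whose colour decides whether `i + 1 + 1 = i - 1` belongs.
  contrapose! hne with hcolor
  obtain ⟨i, hi⟩ := hST
  have hmem : i ∈ S ↔ i ∈ T := by
    simp only [Finset.mem_inter] at hi
    tauto
  have hnext := add_one_mem_iff_of_cyclicColor_eq (hcolor i hi)
  have hprev : i - 1 ∈ S ↔ i - 1 ∈ T := by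
    by_cases hS : i + 1 ∈ S
    · have h := add_one_mem_iff_of_cyclicColor_eq
        (hcolor (i + 1) (Finset.mem_inter.2 ⟨hS, hnext.1 hS⟩))
      rwa [show i + 1 + 1 = i - 1 by grind] at h
    · exact sub_one_mem_iff_of_cyclicColor_eq (hcolor i hi) hS
  have hcases : ∀ i j : ZMod 3, j = i ∨ j = i + 1 ∨ j = i - 1 := by decide
  ext j
  rcases hcases i j with rfl | rfl | rfl <;> assumption

theorem isSeparatingColoring_cyclicColor {P : Finset ℕ} (hP : ∀ p ∈ P, 3 ≤ p)
    {f : ℕ → ZMod 3} (hf : Set.InjOn f P) :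
    IsSeparatingColoring P fun S p ↦ cyclicColor (S.image f) (f p) := by
  intro S hS T hT hne hST
  have hinter : S.image f ∩ T.image f = (S ∩ T).image f :=
    (Finset.image_inter_of_injOn S T (hf.mono (by simp [hS, hT]))).symm
  obtain ⟨i, hi, hcolor⟩ := exists_cyclicColor_ne
    (fun h ↦ hne ((Finset.image_eq_image_iff_of_injOn hf hS hT).1 h))
    (hinter ▸ hST.image f)
  obtain ⟨p, hp, rfl⟩ := Finset.mem_image.1 (hinter ▸ hi)
  refine ⟨p, hp, fun hmod ↦ hcolor (hmod.eq_of_abs_lt ?_)⟩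
  have hp₃ := hP p (hS (Finset.mem_of_mem_inter_left hp))
  have hcS := Finset.mem_Icc.1 (cyclicColor_mem_Icc (S.image f) (f p))
  have hcT := Finset.mem_Icc.1 (cyclicColor_mem_Icc (T.image f) (f p))
  rw [abs_lt]
  lia

theorem nice_3675_general {n : ℕ} (hn : Odd n) (hnine : ¬ 9 ∣ n) (hω : n.primeFactors.card ≤ 3) :
    IsNice n := by
  obtain ⟨f, -, hf⟩ := n.primeFactors.finite_toSet.exists_injOn_of_encard_le
    (t := (Set.univ : Set (ZMod 3))) (by simpa [Set.encard_univ] using hω)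
  have hthree : ∀ p ∈ n.primeFactors, 3 ≤ p := fun p hp ↦
    (Nat.prime_of_mem_primeFactors hp).two_le.lt_of_ne
      (hn.ne_two_of_dvd_nat (Nat.dvd_of_mem_primeFactors hp)).symm
  refine (isSeparatingColoring_cyclicColor hthree hf).isNice hn.pos.ne' fun S hS p hp hsq ↦ ?_
  have hp₃ : p ≠ 3 := by
    rintro rfl
    exact hnine hsq
  have hcS := Finset.mem_Icc.1 (cyclicColor_mem_Icc (S.image f) (f p))
  exact Nat.not_dvd_of_pos_of_lt hcS.1 (hcS.2.trans_lt ((hthree p (hS hp)).lt_of_ne' hp₃))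

theorem nice_3675 : IsNice 3675 :=
  nice_3675_general (by decide) (by decide) (by simp [Nat.primeFactors])
end
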